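/- Let F be a number field with ring of integers O_F, let G be a finite group, and let A be an O_F-order with O_F[G] ⊆ A ⊆ F[G]. Let L be a finite field extension of F of degree k = [L:F] whose ring of integers O_L is free as an O_F-module (necessarily of rank k). Let N be a finitely generated locally free A-module such that N ⊗_{O_F} O_L is a stably free module over A ⊗_{O_F} O_L, i.e. there exist natural numbers n and m with (A ⊗_{O_F} O_L)^n ⊕ (N ⊗_{O_F} O_L) ≅ (A ⊗_{O_F} O_L)^{n+m} as A ⊗_{O_F} O_L-modules. Then A^{nk} ⊕ N^{⊕ k} ≅ A^{(n+m)k} as A-modules. -/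

import Mathlib

open NumberField
open scoped TensorProduct

section BaseChange

variable {R S A N : Type*} [CommRing R] [CommRing S] [Algebra R S]
  [Ring A] [Algebra R A]
  [AddCommGroup N] [Module R N] [Module A N] [IsScalarTower R A N]

/-- The action of the `R`-algebra `A` on the base change `S ⊗[R] N` of an `A`-module `N`
along `R → S`, acting through the factor `N`, as an algebra homomorphism into the
`S`-linear endomorphisms. -/
noncomputable def baseChangeActionHom : A →ₐ[R] Module.End S (S ⊗[R] N) :=
  (Module.End.baseChangeHom R S N).comp (Algebra.lsmul R R N)

/-- The `A`-module structure on the base change `S ⊗[R] N` (with `A` acting through `N`). -/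
@[local instance 10] noncomputable def baseChangeModuleAux : Module A (S ⊗[R] N) :=
  Module.compHom _ (baseChangeActionHom (R := R) (S := S) (A := A) (N := N)).toRingHom

lemma baseChange_smul_def (a : A) (x : S ⊗[R] N) :
    a • x = baseChangeActionHom (R := R) (S := S) (A := A) (N := N) a x := rfl

lemma bc_smulCommClass : SMulCommClass A S (S ⊗[R] N) where
  smul_comm a s x := by
    rw [baseChange_smul_def, baseChange_smul_def]
    exact (baseChangeActionHom (R := R) (S := S) (A := A) (N := N) a).map_smul s x

lemma bc_isScalarTower : IsScalarTower R A (S ⊗[R] N) where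
  smul_assoc r a x := by
    rw [baseChange_smul_def, baseChange_smul_def, map_smul, LinearMap.smul_apply]

/-- The canonical `A ⊗[R] S`-module structure on the base change `S ⊗[R] N` of an
`A`-module `N` along `R → S`: the factor `A` acts through `N` and `S` acts through `S`. -/
@[local instance] noncomputable def baseChangeModule : Module (A ⊗[R] S) (S ⊗[R] N) := by
  letI i1 : IsScalarTower R S (S ⊗[R] N) := TensorProduct.isScalarTower_left
  letI i2 : SMulCommClass A S (S ⊗[R] N) := bc_smulCommClass
  letI i3 : IsScalarTower R A (S ⊗[R] N) := bc_isScalarTower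
  exact @TensorProduct.Algebra.module R A S (S ⊗[R] N) _ _ TensorProduct.leftModule _ _
    (baseChangeModuleAux) TensorProduct.leftModule _ _ i3 i1 i2

end BaseChange

attribute [local instance 10] baseChangeModuleAux
attribute [local instance] baseChangeModule

/-!
An isomorphism of `A ⊗[R] S`-modules is in particular an isomorphism of `A`-modules. An `R`-basis of
`S` indexed by `κ` identifies the `A`-modules `A ⊗[R] S` and `S ⊗[R] N` with `κ → A` and `κ → N`, so
restricting scalars along `A → A ⊗[R] S` turns an isomorphism witnessing that `S ⊗[R] N` is stably
free into one between `A ^ (n * k) × N ^ k` and `A ^ ((n + m) * k)`.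
-/

section RestrictScalars

variable {R S A N κ : Type*} [CommRing R] [CommRing S] [Algebra R S] [Ring A] [Algebra R A]
  [AddCommGroup N] [Module R N] [Module A N] [IsScalarTower R A N]

lemma baseChange_smul_tmul (a : A) (s : S) (x : N) :
    a • (s ⊗ₜ[R] x) = s ⊗ₜ[R] (a • x) := rfl

lemma baseChange_tmul_smul (a : A) (s : S) (x : S ⊗[R] N) :
    (a ⊗ₜ[R] s) • x = a • s • x := rfl

@[local instance]
lemma baseChange_isScalarTower : IsScalarTower A (A ⊗[R] S) (S ⊗[R] N) where
  smul_assoc a t x := by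
    induction t with
    | zero => simp only [smul_zero, zero_smul]
    | add t u ht hu => simp only [smul_add, add_smul, ht, hu]
    | tmul b s =>
      rw [TensorProduct.smul_tmul', smul_eq_mul, baseChange_tmul_smul, baseChange_tmul_smul,
        mul_smul]

/-- The swap `S ⊗[R] N ≃ N ⊗[R] S` as an isomorphism of `A`-modules, where `A` acts through `N` on
both sides. -/
noncomputable def baseChangeComm : S ⊗[R] N ≃ₗ[A] N ⊗[R] S where
  __ := TensorProduct.comm R S N
  map_smul' a x := by
    change TensorProduct.comm R S N (a • x) = a • TensorProduct.comm R S N x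
    induction x with
    | zero => simp only [smul_zero, map_zero]
    | add x y hx hy => simp only [smul_add, map_add, hx, hy]
    | tmul s x =>
      rw [baseChange_smul_tmul, TensorProduct.comm_tmul, TensorProduct.comm_tmul,
        TensorProduct.smul_tmul']

variable [Finite κ] [DecidableEq κ]

/-- The coordinates of elements of `N ⊗[R] S` with respect to a finite `R`-basis of `S`, as an
isomorphism of `A`-modules. -/
noncomputable def tensorEquivFun (b : Module.Basis κ R S) : N ⊗[R] S ≃ₗ[A] (κ → N) :=
  TensorProduct.AlgebraTensorModule.congr (.refl A N) b.repr ≪≫ₗ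
    TensorProduct.finsuppScalarRight R A N κ ≪≫ₗ Finsupp.linearEquivFunOnFinite A N κ

/-- The coordinates, applied entrywise, of families in `A ⊗[R] S` with respect to a finite `R`-basis
of `S`. -/
noncomputable def piTensorEquivFun (ι : Type*) (b : Module.Basis κ R S) :
    (ι → A ⊗[R] S) ≃ₗ[A] (ι × κ → A) :=
  .piCongrRight (fun _ ↦ tensorEquivFun b) ≪≫ₗ (LinearEquiv.curry A A ι κ).symm

/-- The restriction of scalars to `A` of an isomorphism `(A ⊗ S)^ι × (S ⊗ N) ≃ (A ⊗ S)^ι'` of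
`A ⊗[R] S`-modules, written in coordinates with respect to a finite `R`-basis of `S`. -/
noncomputable def restrictScalarsEquiv {ι ι' : Type*} (b : Module.Basis κ R S)
    (E : ((ι → A ⊗[R] S) × (S ⊗[R] N)) ≃ₗ[A ⊗[R] S] (ι' → A ⊗[R] S)) :
    ((ι × κ → A) × (κ → N)) ≃ₗ[A] (ι' × κ → A) :=
  ((piTensorEquivFun ι b).prodCongr (baseChangeComm ≪≫ₗ tensorEquivFun b)).symm ≪≫ₗ
    E.restrictScalars A ≪≫ₗ piTensorEquivFun ι' b

theorem capitulation_stmt11_general {k : ℕ} (hfree : Nonempty (S ≃ₗ[R] (Fin k → R))) (n m : ℕ)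
    (hstablyfree : Nonempty (((Fin n → A ⊗[R] S) × (S ⊗[R] N))
      ≃ₗ[A ⊗[R] S] (Fin (n + m) → A ⊗[R] S))) :
    Nonempty (((Fin (n * k) → A) × (Fin k → N)) ≃ₗ[A] (Fin ((n + m) * k) → A)) := by
  obtain ⟨e⟩ := hfree
  obtain ⟨E⟩ := hstablyfree
  exact ⟨(LinearEquiv.funCongrLeft A A finProdFinEquiv).prodCongr (.refl A _) ≪≫ₗ
    restrictScalarsEquiv (.ofEquivFun e) E ≪≫ₗ
    LinearEquiv.funCongrLeft A A finProdFinEquiv.symm⟩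

end RestrictScalars

set_option maxHeartbeats 2000000 in
set_option synthInstance.maxHeartbeats 1000000 in
/-- Proposition `non-cap`, key step: let `F` be a number field, `G` a finite
group, and `A` an `𝓞 F`-order with `𝓞 F[G] ⊆ A ⊆ F[G]` (formalized as an `𝓞 F`-subalgebra
of the group algebra `F[G] = MonoidAlgebra F G` containing all group elements and finitely
generated over `𝓞 F`).  Let `L/F` be a finite extension of degree `k = [L : F]` whose ring
of integers is free (of rank `k`) as an `𝓞 F`-module.  Let `N` be a finitely generated
locally free `A`-module such that the base change of `N` to `A ⊗[𝓞 F] 𝓞 L` is stably free: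
`(A ⊗ 𝓞 L)^n ⊕ (N ⊗ 𝓞 L) ≅ (A ⊗ 𝓞 L)^(n+m)`.  Then `A^(n*k) ⊕ N^(⊕ k) ≅ A^((n+m)*k)`
as `A`-modules. -/
theorem capitulation_stmt11
    (F : Type*) [Field F] [NumberField F]
    (G : Type*) [Group G] [Finite G]
    (A : Subalgebra (𝓞 F) (MonoidAlgebra F G))
    (hGA : ∀ g : G, MonoidAlgebra.of F G g ∈ A)
    (hAfin : Module.Finite (𝓞 F) A)
    (L : Type*) [Field L] [NumberField L] [Algebra F L] [FiniteDimensional F L]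
    (hfree : Nonempty ((𝓞 L) ≃ₗ[𝓞 F] (Fin (Module.finrank F L) → 𝓞 F)))
    (N : Type*) [AddCommGroup N] [Module (𝓞 F) N] [Module A N] [IsScalarTower (𝓞 F) A N]
    [Module.Finite A N]
    (hlocfree : ∀ (p : Ideal (𝓞 F)) [p.IsPrime], p ≠ ⊥ →
      ∃ t : ℕ, Nonempty ((Localization.AtPrime p ⊗[𝓞 F] N)
        ≃ₗ[A ⊗[𝓞 F] Localization.AtPrime p]
        (Fin t → (A ⊗[𝓞 F] Localization.AtPrime p))))
    (n m : ℕ)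
    (hstablyfree : Nonempty (((Fin n → (A ⊗[𝓞 F] 𝓞 L)) × (𝓞 L ⊗[𝓞 F] N))
      ≃ₗ[A ⊗[𝓞 F] 𝓞 L] (Fin (n + m) → (A ⊗[𝓞 F] 𝓞 L)))) :
    Nonempty (((Fin (n * Module.finrank F L) → A) × (Fin (Module.finrank F L) → N))
      ≃ₗ[A] (Fin ((n + m) * Module.finrank F L) → A)) :=
  capitulation_stmt11_general hfree n m hstablyfree
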